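/- Let X be an infinite set, n ≥ 2 a natural number, 𝒫_n an n-uniform partition of X, and M an inverse subsemigroup of I_X. If there exists a natural number m such that every orbit of M has cardinality at most m, then M ≼ PStab(𝒫_n). -/

import Mathlib

open Set Cardinal

universe u

/-- A chart on `X` (an element of the symmetric inverse monoid `I_X`): a partial
bijection between subsets of `X`, encoded as a functional, injective relation,
i.e. a set of pairs. -/
structure Chart (X : Type u) : Type u where
  rel : Set (X × X)
  functional : ∀ ⦃x y y'⦄, (x, y) ∈ rel → (x, y') ∈ rel → y = y'
  injective : ∀ ⦃x x' y⦄, (x, y) ∈ rel → (x', y) ∈ rel → x = x'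

namespace Chart

variable {X : Type u}

/-- Composition of charts: compose wherever possible. -/
instance : Mul (Chart X) :=
  ⟨fun f g =>
    { rel := {p | ∃ y, (p.1, y) ∈ f.rel ∧ (y, p.2) ∈ g.rel}
      functional := by
        rintro x y y' ⟨z, hz1, hz2⟩ ⟨w, hw1, hw2⟩
        obtain rfl : z = w := f.functional hz1 hw1
        exact g.functional hz2 hw2
      injective := by
        rintro x x' y ⟨z, hz1, hz2⟩ ⟨w, hw1, hw2⟩
        obtain rfl : z = w := g.injective hz2 hw2
        exact f.injective hz1 hw1 }⟩

/-- The inverse chart. -/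
instance : Inv (Chart X) :=
  ⟨fun f =>
    { rel := {p | (p.2, p.1) ∈ f.rel}
      functional := fun _ _ _ h h' => f.injective h h'
      injective := fun _ _ _ h h' => f.functional h h' }⟩

/-- The domain of a chart. -/
def dom (f : Chart X) : Set X := {x | ∃ y, (x, y) ∈ f.rel}

/-- The range (image) of a chart. -/
def ran (f : Chart X) : Set X := {y | ∃ x, (x, y) ∈ f.rel}

end Chart

/-- Membership in the subsemigroup of `I_X` generated by a set of charts. -/
inductive InGen {X : Type u} (S : Set (Chart X)) : Chart X → Prop
  | base {f : Chart X} : f ∈ S → InGen S f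
  | mul {f g : Chart X} : InGen S f → InGen S g → InGen S (f * g)

/-- The subsemigroup of `I_X` generated by a set of charts. -/
def Sgen {X : Type u} (S : Set (Chart X)) : Set (Chart X) := {f | InGen S f}

/-- The Bergman–Shelah preorder `S ≼ T` on subsets of `I_X`: there is a countable
subset `U ⊆ I_X` with `S` contained in the subsemigroup generated by `T ∪ U`. -/
def BSleq {X : Type u} (S T : Set (Chart X)) : Prop :=
  ∃ U : Set (Chart X), U.Countable ∧ S ⊆ Sgen (T ∪ U)

/-- Bergman–Shelah equivalence `S ≈ T`. -/
def BSequiv {X : Type u} (S T : Set (Chart X)) : Prop := BSleq S T ∧ BSleq T S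

/-- The Bergman–Shelah preorder relative to a cardinal `κ`: `S ≼_κ T` iff there is
`U ⊆ I_X` with `|U| < κ` and `S` contained in the subsemigroup generated by `T ∪ U`. -/
def BSleqC {X : Type u} (κ : Cardinal.{u}) (S T : Set (Chart X)) : Prop :=
  ∃ U : Set (Chart X), #↥U < κ ∧ S ⊆ Sgen (T ∪ U)

/-- Bergman–Shelah equivalence relative to a cardinal `κ`. -/
def BSequivC {X : Type u} (κ : Cardinal.{u}) (S T : Set (Chart X)) : Prop :=
  BSleqC κ S T ∧ BSleqC κ T S

/-- A chart is a permutation of `X` if it is everywhere defined and surjective. -/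
def IsPermChart {X : Type u} (f : Chart X) : Prop :=
  (∀ x : X, ∃ y, (x, y) ∈ f.rel) ∧ ∀ y : X, ∃ x, (x, y) ∈ f.rel

/-- The partwise stabiliser of a family of subsets of `X`: all permutations of `X`
mapping each member of the family onto itself. -/
def PStab {X : Type u} (P : Set (Set X)) : Set (Chart X) :=
  {f | IsPermChart f ∧ ∀ B ∈ P, {y | ∃ x ∈ B, (x, y) ∈ f.rel} = B}

/-- A subset of `I_X` closed under composition. -/
def IsSubsemigroup {X : Type u} (S : Set (Chart X)) : Prop :=
  ∀ f ∈ S, ∀ g ∈ S, f * g ∈ S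

/-- A subsemigroup of `I_X` closed under inversion. -/
def IsInverseSubsemigroup {X : Type u} (S : Set (Chart X)) : Prop :=
  IsSubsemigroup S ∧ ∀ f ∈ S, f⁻¹ ∈ S

/-- The orbit of a point under a set of charts: `{x} ∪ {xf : f ∈ M, x ∈ dom f}`. -/
def ChartOrbit {X : Type u} (M : Set (Chart X)) (x : X) : Set X :=
  insert x {y | ∃ f ∈ M, (x, y) ∈ f.rel}

/-- The cone of a point under a set of charts: `{xs : s ∈ S, x ∈ dom s}`. -/
def ChartCone {X : Type u} (S : Set (Chart X)) (x : X) : Set X :=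
  {y | ∃ f ∈ S, (x, y) ∈ f.rel}

/-- The semilattice of idempotents of `I_X`: the partial identity charts. -/
def EX (X : Type u) : Set (Chart X) := {f | ∀ x y : X, (x, y) ∈ f.rel → y = x}

/-- A `κ`-uniform partition: every part has cardinality `κ`. -/
def IsUniformPartition {X : Type u} (κ : Cardinal.{u}) (P : Set (Set X)) : Prop :=
  Setoid.IsPartition P ∧ ∀ B ∈ P, #↥B = κ

/-- A `κ`-unbounded partition: all parts have cardinality `< κ` but no cardinal
`c < κ` bounds the cardinalities of all parts. -/
def IsUnboundedPartition {X : Type u} (κ : Cardinal.{u}) (P : Set (Set X)) : Prop :=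
  Setoid.IsPartition P ∧ (∀ B ∈ P, #↥B < κ) ∧ ¬∃ c < κ, ∀ B ∈ P, #↥B ≤ c

/-- A `κ`-bounded partition: some cardinal `c < κ` bounds the cardinalities of
all parts. -/
def IsBoundedPartition {X : Type u} (κ : Cardinal.{u}) (P : Set (Set X)) : Prop :=
  Setoid.IsPartition P ∧ ∃ c < κ, ∀ B ∈ P, #↥B ≤ c

/-- A rooted tree on (a subset of) `X`, encoded via its parent function: every
vertex reaches the root by finitely many applications of `par`. -/
structure RTree (X : Type u) : Type u where
  verts : Set X
  root : X
  root_mem : root ∈ verts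
  par : X → X
  par_mem : ∀ x ∈ verts, par x ∈ verts
  par_root : par root = root
  par_reaches : ∀ x ∈ verts, ∃ n : ℕ, par^[n] x = root

namespace RTree

variable {X : Type u}

/-- `T.anc x y` : `x` is an ancestor of `y` (or `x = y`), i.e. `x` lies on the
rooted path to `y`. -/
def anc (T : RTree X) (x y : X) : Prop := ∃ n : ℕ, T.par^[n] y = x

/-- The level of a vertex: its distance to the root. -/
noncomputable def level (T : RTree X) (x : X) : ℕ := sInf {n : ℕ | T.par^[n] x = T.root}

/-- The children of a vertex. -/
def children (T : RTree X) (x : X) : Set X :=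
  {y | y ∈ T.verts ∧ T.par y = x ∧ y ≠ x}

/-- The neighbours of a vertex in the tree (its children together with its
parent, if the vertex is not the root); the degree of the vertex is the size
of this set. -/
def nbhd (T : RTree X) (x : X) : Set X :=
  {y | y ∈ T.verts ∧ ((T.par y = x ∧ y ≠ x) ∨ (T.par x = y ∧ x ≠ y))}

/-- `P` is the vertex set of a (finite or infinite) path of `T` starting at the
root: a nonempty set of vertices closed under taking parents and linearly
ordered by ancestry. -/
def IsRootedPath (T : RTree X) (P : Set X) : Prop :=
  P.Nonempty ∧ P ⊆ T.verts ∧ (∀ x ∈ P, T.par x ∈ P) ∧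
    ∀ x ∈ P, ∀ y ∈ P, T.anc x y ∨ T.anc y x

end RTree

/-- `T'` is a subtree of `T`: a rooted tree on a subset of the vertices of `T`,
with the same root and the same parent relation. -/
def IsSubtree {X : Type u} (T' T : RTree X) : Prop :=
  T'.verts ⊆ T.verts ∧ T'.root = T.root ∧ ∀ x ∈ T'.verts, T'.par x = T.par x

/-- `Q` is a quasi-subtree of `T`: a rooted tree on a subset of the vertices of
`T` preserving the ancestry relation and the levels of `T`. -/
def IsQuasiSubtree {X : Type u} (Q T : RTree X) : Prop :=
  Q.verts ⊆ T.verts ∧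
    (∀ x ∈ Q.verts, ∀ y ∈ Q.verts, (Q.anc x y ↔ T.anc x y)) ∧
    ∀ x ∈ Q.verts, ∀ y ∈ Q.verts, (Q.level x = Q.level y ↔ T.level x = T.level y)

/-- Isomorphism of rooted trees: a bijection of the vertex sets mapping root to
root and commuting with the parent functions. -/
def RTreeIso {X : Type u} {Y : Type u} (T : RTree X) (R : RTree Y) : Prop :=
  ∃ φ : X → Y, Set.BijOn φ T.verts R.verts ∧ φ T.root = R.root ∧
    ∀ x ∈ T.verts, φ (T.par x) = R.par (φ x)

/-- The semigroup `𝒮(T)` of path-bijections of a rooted tree `T`: charts whose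
domain and range are vertex sets of rooted paths and which preserve levels. -/
def pathSg {X : Type u} (T : RTree X) : Set (Chart X) :=
  {f | (∃ P, T.IsRootedPath P ∧ Chart.dom f = P) ∧
    (∃ Q, T.IsRootedPath Q ∧ Chart.ran f = Q) ∧
    ∀ x y : X, (x, y) ∈ f.rel → T.level y = T.level x}

/-! A relation all of whose rows and columns have at most `m` elements is covered by finitely many
fixed charts `t j`: number the elements of each row and of each column by `0, …, m - 1` and let
`t j` consist of the pairs carrying the `j`-th pair of numbers. A chart `f` inside the relation is
thus determined by saying, for each `x`, which `t j` (if any) is to be applied to `x`.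

Since `P` has `#X` nontrivial parts, `(X × ℕ) × Bool` embeds into `X` so that each fibre
`{w} × Bool` lies in one part. Swapping the two points of an arbitrary set of fibres is then a
permutation in `PStab P`, and alternating such swaps with one fixed chart carries every `x` to the
copy of `x` indexed by its own `j`. There all the `t j` are applied at once, by a single fixed
chart, and the inverse of a map of the same kind leads back to `X`. -/

namespace Chart

variable {X : Type u} {I J : Type*}

@[ext]
theorem ext {f g : Chart X} (h : ∀ x y, (x, y) ∈ f.rel ↔ (x, y) ∈ g.rel) : f = g := by
  cases f
  cases g
  congr 1
  ext ⟨x, y⟩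
  exact h x y

theorem mem_mul {f g : Chart X} {x z : X} :
    (x, z) ∈ (f * g).rel ↔ ∃ y, (x, y) ∈ f.rel ∧ (y, z) ∈ g.rel := Iff.rfl

theorem mem_inv {f : Chart X} {x y : X} : (x, y) ∈ f⁻¹.rel ↔ (y, x) ∈ f.rel := Iff.rfl

theorem mul_inv_rev (f g : Chart X) : (f * g)⁻¹ = g⁻¹ * f⁻¹ := by
  ext x y
  simp only [mem_inv, mem_mul, and_comm]

/-- The chart `u i ↦ v i` given by two injective families `u` and `v`. -/
def ofEmbeddings (u v : I ↪ X) : Chart X where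
  rel := range fun i => (u i, v i)
  functional := by
    rintro x y y' ⟨i, hi⟩ ⟨j, hj⟩
    obtain rfl : i = j := u.injective ((Prod.ext_iff.1 hi).1.trans (Prod.ext_iff.1 hj).1.symm)
    exact congrArg Prod.snd (hi.symm.trans hj)
  injective := by
    rintro x x' y ⟨i, hi⟩ ⟨j, hj⟩
    obtain rfl : i = j := v.injective ((Prod.ext_iff.1 hi).2.trans (Prod.ext_iff.1 hj).2.symm)
    exact congrArg Prod.fst (hi.symm.trans hj)

theorem mem_ofEmbeddings {u v : I ↪ X} {x y : X} :
    (x, y) ∈ (ofEmbeddings u v).rel ↔ ∃ i, u i = x ∧ v i = y := by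
  simp only [ofEmbeddings, mem_range, Prod.mk.injEq]

theorem ofEmbeddings_mul_ofEmbeddings (s : I ↪ X) (q : I ↪ J) (u v : J ↪ X) :
    ofEmbeddings s (q.trans u) * ofEmbeddings u v = ofEmbeddings s (q.trans v) := by
  ext x y
  simp only [mem_mul, mem_ofEmbeddings, Function.Embedding.trans_apply]
  constructor
  · rintro ⟨z, ⟨i, rfl, rfl⟩, j, hj, rfl⟩
    exact ⟨i, rfl, congrArg v (u.injective hj).symm⟩
  · rintro ⟨i, rfl, rfl⟩
    exact ⟨u (q i), ⟨i, rfl, rfl⟩, q i, rfl, rfl⟩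

/-- A permutation of `X`, regarded as a chart with full domain. -/
def ofPerm (σ : Equiv.Perm X) : Chart X := ofEmbeddings (.refl X) σ.toEmbedding

theorem mem_ofPerm {σ : Equiv.Perm X} {x y : X} : (x, y) ∈ (ofPerm σ).rel ↔ σ x = y := by
  simp [ofPerm, mem_ofEmbeddings]

/-- The disjoint union of a family `t` of charts, realised inside `X` by letting `t k` act on the
copy `u (·, k)` of `X`, so that all charts of the family are applied at once. -/
def disjointUnion (u : X × I ↪ X) (t : I → Chart X) : Chart X where
  rel := {p | ∃ x y k, (x, y) ∈ (t k).rel ∧ u (x, k) = p.1 ∧ u (y, k) = p.2}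
  functional := by
    rintro p q q' ⟨x, y, k, hxy, rfl, rfl⟩ ⟨x', y', k', hxy', hx, rfl⟩
    obtain ⟨rfl, rfl⟩ : x' = x ∧ k' = k := Prod.ext_iff.1 (u.injective hx)
    rw [(t k').functional hxy hxy']
  injective := by
    rintro p p' q ⟨x, y, k, hxy, rfl, rfl⟩ ⟨x', y', k', hxy', rfl, hy⟩
    obtain ⟨rfl, rfl⟩ : y' = y ∧ k' = k := Prod.ext_iff.1 (u.injective hy)
    rw [(t k').injective hxy hxy']

theorem mem_disjointUnion {u : X × I ↪ X} {t : I → Chart X} {p q : X} :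
    (p, q) ∈ (disjointUnion u t).rel ↔
      ∃ x y k, (x, y) ∈ (t k).rel ∧ u (x, k) = p ∧ u (y, k) = q := Iff.rfl

end Chart

namespace InGen

variable {X : Type u} {S T : Set (Chart X)} {f : Chart X}

theorem mono (hST : S ⊆ T) (hf : InGen S f) : InGen T f := by
  induction hf with
  | base hf => exact .base (hST hf)
  | mul _ _ hf hg => exact .mul hf hg

theorem inv (hST : ∀ f ∈ S, f⁻¹ ∈ T) (hf : InGen S f) : InGen T f⁻¹ := by
  induction hf with
  | base hf => exact .base (hST _ hf)
  | mul _ _ hf hg => exact Chart.mul_inv_rev _ _ ▸ .mul hg hf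

end InGen

section PStab

variable {X : Type u} {P : Set (Set X)}

theorem inv_mem_PStab {f : Chart X} (hf : f ∈ PStab P) : f⁻¹ ∈ PStab P := by
  obtain ⟨⟨htotal, hsurj⟩, hP⟩ := hf
  refine ⟨⟨hsurj, htotal⟩, fun B hB => Subset.antisymm ?_ fun x hx => ?_⟩
  · rintro x ⟨y, hy, hxy⟩
    obtain ⟨x', hx', hx'y⟩ := (hP B hB).ge hy
    obtain rfl : x' = x := f.injective hx'y hxy
    exact hx'
  · obtain ⟨y, hxy⟩ := htotal x
    exact ⟨y, (hP B hB).le ⟨x, hx, hxy⟩, hxy⟩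

theorem ofPerm_mem_PStab {σ : Equiv.Perm X} (hσ : ∀ B ∈ P, ∀ x, σ x ∈ B ↔ x ∈ B) :
    Chart.ofPerm σ ∈ PStab P := by
  refine ⟨⟨fun x => ⟨σ x, Chart.mem_ofPerm.2 rfl⟩, fun y =>
    ⟨σ.symm y, Chart.mem_ofPerm.2 (σ.apply_symm_apply y)⟩⟩, fun B hB => ?_⟩
  calc {y | ∃ x ∈ B, (x, y) ∈ (Chart.ofPerm σ).rel} = σ '' B := by
        simp only [Chart.mem_ofPerm, Set.image]
    _ = σ.symm ⁻¹' B := σ.image_eq_preimage_symm B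
    _ = B := by
        ext y
        rw [mem_preimage, ← hσ B hB, σ.apply_symm_apply]

end PStab

section Routing

variable {α : Type*}

/-- The embedding of `α` describing where its elements are after `r` rounds, when `x` is scheduled
for release in round `k x`: `x` waits at `((x, r), false)` until that round, in which it moves to
`((x, k x), true)` to stay there. -/
def stage (k : α → ℕ) (r : ℕ) : α ↪ (α × ℕ) × Bool where
  toFun x := if k x < r then ((x, k x), true) else ((x, r), false)
  inj' x y hxy := by
    simp only at hxy
    split_ifs at hxy <;> simp_all

/-- The involution carrying out the releases of round `r`: it exchanges the waiting and the released
copy of those `x` with `k x = r`. -/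
def release (k : α → ℕ) (r : ℕ) : Equiv.Perm ((α × ℕ) × Bool) :=
  .prodCongrRight fun w => if w.2 = r ∧ k w.1 = r then Equiv.boolNot else .refl Bool

/-- The passage from each round to the next one, which fixes the released copies. -/
@[simps]
def advance : (α × ℕ) × Bool ↪ (α × ℕ) × Bool where
  toFun s := if s.2 then s else ((s.1.1, s.1.2 + 1), false)
  inj' := by
    rintro ⟨⟨x, i⟩, _ | _⟩ ⟨⟨y, j⟩, _ | _⟩ h <;> simp_all

theorem stage_of_lt {k : α → ℕ} {r : ℕ} {x : α} (h : k x < r) :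
    stage k r x = ((x, k x), true) := if_pos h

theorem stage_of_le {k : α → ℕ} {r : ℕ} {x : α} (h : r ≤ k x) :
    stage k r x = ((x, r), false) := if_neg h.not_gt

theorem stage_zero (k k' : α → ℕ) : stage k 0 = stage k' 0 := by
  ext x : 1
  rw [stage_of_le (Nat.zero_le _), stage_of_le (Nat.zero_le _)]

theorem stage_eq_released_iff {k : α → ℕ} {r j : ℕ} {x y : α} :
    stage k r x = ((y, j), true) ↔ k x < r ∧ x = y ∧ k x = j := by
  rcases lt_or_ge (k x) r with h | h
  · simp [stage_of_lt h, h]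
  · simp [stage_of_le h, h.not_gt]

theorem stage_succ (k : α → ℕ) (r : ℕ) :
    stage k (r + 1) = ((stage k r).trans (release k r).toEmbedding).trans advance := by
  ext x : 1
  simp only [Function.Embedding.trans_apply, Equiv.coe_toEmbedding]
  rcases lt_trichotomy (k x) r with h | h | h
  · rw [stage_of_lt h, stage_of_lt (h.trans r.lt_succ_self)]
    simp [release, h.ne]
  · rw [stage_of_le h.ge, stage_of_lt (h.trans_lt r.lt_succ_self)]
    simp [release, h]
  · rw [stage_of_le h.le, stage_of_le h]
    simp [release, h.ne']

end Routing

section Encoding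

variable {X : Type u} (ι : (X × ℕ) × Bool ↪ X)

/-- The chart `x ↦ ι (stage k r x)`, which sends `x` to its copy with index `k x` if `k x < r`. -/
def encode (k : X → ℕ) (r : ℕ) : Chart X := .ofEmbeddings (.refl X) ((stage k r).trans ι)

/-- The chart on `X` induced by `advance`. -/
def advanceChart : Chart X := .ofEmbeddings ι (advance.trans ι)

/-- The embedding of `X × ℕ` into `X` as the set of released copies. -/
def releasedCopy : X × ℕ ↪ X := (Function.Embedding.sectL (X × ℕ) true).trans ι

variable {ι}

theorem encode_zero (k k' : X → ℕ) : encode ι k 0 = encode ι k' 0 := by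
  rw [encode, encode, stage_zero k k']

theorem encode_succ (k : X → ℕ) (r : ℕ) :
    encode ι k (r + 1) =
      encode ι k r * .ofPerm ((release k r).viaEmbedding ι) * advanceChart ι := by
  have hrelease : encode ι k r * .ofPerm ((release k r).viaEmbedding ι) =
      .ofEmbeddings (.refl X) (((stage k r).trans (release k r).toEmbedding).trans ι) := by
    refine (Chart.ofEmbeddings_mul_ofEmbeddings (.refl X) ((stage k r).trans ι) (.refl X)
      ((release k r).viaEmbedding ι).toEmbedding).trans ?_
    congr 1
    ext x
    exact (release k r).viaEmbedding_apply ι (stage k r x)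
  rw [hrelease, advanceChart, Chart.ofEmbeddings_mul_ofEmbeddings, encode, stage_succ]
  rfl

theorem viaEmbedding_release_mem_iff {B : Set X} (hB : ∀ w c d, ι (w, c) ∈ B → ι (w, d) ∈ B)
    (k : X → ℕ) (r : ℕ) (x : X) : (release k r).viaEmbedding ι x ∈ B ↔ x ∈ B := by
  by_cases hx : x ∈ range ι
  · obtain ⟨⟨w, c⟩, rfl⟩ := hx
    rw [Equiv.Perm.viaEmbedding_apply, release, Equiv.prodCongrRight_apply]
    exact ⟨hB _ _ _, hB _ _ _⟩
  · rw [Equiv.Perm.viaEmbedding_apply_of_notMem _ _ _ hx]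

theorem encode_mem_Sgen {P : Set (Set X)} (hP : ∀ B ∈ P, ∀ w c d, ι (w, c) ∈ B → ι (w, d) ∈ B)
    (k : X → ℕ) (r : ℕ) : encode ι k r ∈ Sgen (PStab P ∪ {encode ι 0 0, advanceChart ι}) := by
  induction r with
  | zero => exact .base (by simp [encode_zero k 0])
  | succ r ih =>
    rw [encode_succ]
    have hrelease : Chart.ofPerm ((release k r).viaEmbedding ι) ∈ PStab P :=
      ofPerm_mem_PStab fun B hB => viaEmbedding_release_mem_iff (hP B hB) k r
    exact .mul (.mul ih (.base (.inl hrelease))) (.base (by simp))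

theorem mem_encode_mul_disjointUnion_mul_inv {t : ℕ → Chart X} {k k' : X → ℕ} {r : ℕ} {x y : X} :
    (x, y) ∈ (encode ι k r * .disjointUnion (releasedCopy ι) t * (encode ι k' r)⁻¹).rel ↔
      k x < r ∧ k' y = k x ∧ (x, y) ∈ (t (k x)).rel := by
  have hencode (k : X → ℕ) (x p : X) : (x, p) ∈ (encode ι k r).rel ↔ ι (stage k r x) = p := by
    simp [encode, Chart.mem_ofEmbeddings]
  have hcopy (w : X × ℕ) : releasedCopy ι w = ι (w, true) := rfl
  simp only [Chart.mem_mul, Chart.mem_inv, Chart.mem_disjointUnion, hencode, hcopy]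
  constructor
  · rintro ⟨_, ⟨_, rfl, x', y', j, hxy, hx, rfl⟩, hy⟩
    obtain ⟨hr, rfl, rfl⟩ := stage_eq_released_iff.1 (ι.injective hx).symm
    obtain ⟨-, rfl, hj⟩ := stage_eq_released_iff.1 (ι.injective hy)
    exact ⟨hr, hj, hxy⟩
  · rintro ⟨hr, hy, hxy⟩
    have hx : stage k r x = ((x, k x), true) := stage_eq_released_iff.2 ⟨hr, rfl, rfl⟩
    have hy : stage k' r y = ((y, k x), true) := stage_eq_released_iff.2 ⟨hy ▸ hr, rfl, hy⟩
    exact ⟨_, ⟨_, rfl, x, y, k x, hxy, congrArg ι hx.symm, rfl⟩, congrArg ι hy⟩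

theorem exists_eq_encode_mul_disjointUnion_mul_inv {t : ℕ → Chart X} {r : ℕ} {f : Chart X}
    (hf : ∀ x y, (x, y) ∈ f.rel → ∃ j < r, (x, y) ∈ (t j).rel) :
    ∃ k k' : X → ℕ,
      f = encode ι k r * .disjointUnion (releasedCopy ι) t * (encode ι k' r)⁻¹ := by
  have hlabel (x : X) : ∃ j, (j < r → x ∈ f.dom) ∧
      ∀ y, (x, y) ∈ f.rel → j < r ∧ (x, y) ∈ (t j).rel := by
    by_cases hx : x ∈ f.dom
    · obtain ⟨y, hxy⟩ := hx
      obtain ⟨j, hj, hxyj⟩ := hf x y hxy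
      exact ⟨j, fun _ => ⟨y, hxy⟩, fun y' hxy' => f.functional hxy hxy' ▸ ⟨hj, hxyj⟩⟩
    · exact ⟨r, fun h => absurd h r.lt_irrefl, fun y hxy => absurd ⟨y, hxy⟩ hx⟩
  choose k hkdom hk using hlabel
  have htransport (y : X) : ∃ j, ∀ x, (x, y) ∈ f.rel → j = k x := by
    by_cases hy : ∃ x, (x, y) ∈ f.rel
    · obtain ⟨x, hxy⟩ := hy
      exact ⟨k x, fun x' hx'y => congrArg k (f.injective hxy hx'y)⟩
    · exact ⟨0, fun x hxy => absurd ⟨x, hxy⟩ hy⟩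
  choose k' hk' using htransport
  refine ⟨k, k', Chart.ext fun x y => ?_⟩
  rw [mem_encode_mul_disjointUnion_mul_inv]
  constructor
  · exact fun hxy => ⟨(hk x y hxy).1, hk' y x hxy, (hk x y hxy).2⟩
  · rintro ⟨hr, -, hxy⟩
    obtain ⟨y', hxy'⟩ := hkdom x hr
    exact (t (k x)).functional (hk x y' hxy').2 hxy ▸ hxy'

theorem BSleq_PStab_of_charts_cover {P : Set (Set X)}
    (hP : ∀ B ∈ P, ∀ w c d, ι (w, c) ∈ B → ι (w, d) ∈ B) {M : Set (Chart X)} {t : ℕ → Chart X}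
    {r : ℕ} (hM : ∀ f ∈ M, ∀ x y, (x, y) ∈ f.rel → ∃ j < r, (x, y) ∈ (t j).rel) :
    BSleq M (PStab P) := by
  let D : Chart X := .disjointUnion (releasedCopy ι) t
  let U : Set (Chart X) :=
    {encode ι 0 0, advanceChart ι, (encode ι 0 0)⁻¹, (advanceChart ι)⁻¹, D}
  have hencode (k : X → ℕ) : InGen (PStab P ∪ U) (encode ι k r) :=
    InGen.mono (union_subset_union_right _ (by grind)) (encode_mem_Sgen hP k r)
  have hdecode (k : X → ℕ) : InGen (PStab P ∪ U) (encode ι k r)⁻¹ := by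
    refine InGen.inv ?_ (encode_mem_Sgen hP k r)
    rintro f (hf | rfl | rfl)
    · exact .inl (inv_mem_PStab hf)
    · exact .inr (by simp [U])
    · exact .inr (by simp [U])
  refine ⟨U, U.toFinite.countable, fun f hf => ?_⟩
  obtain ⟨k, k', rfl⟩ := exists_eq_encode_mul_disjointUnion_mul_inv (ι := ι) (hM f hf)
  exact .mul (.mul (hencode k) (.base (.inr (by simp [U, D])))) (hdecode k')

end Encoding

theorem exists_injOn_lt_of_encard_le {α : Type*} {s : Set α} {m : ℕ} (hs : s.encard ≤ m) :
    ∃ c : α → ℕ, (∀ x ∈ s, c x < m) ∧ InjOn c s :=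
  (finite_of_encard_le_coe hs).exists_injOn_of_encard_le (t := Iio m)
    (by simpa [← Finset.coe_range] using hs)

theorem exists_charts_cover {X : Type u} {R : Set (X × X)} {m : ℕ}
    (hrow : ∀ x, {y | (x, y) ∈ R}.encard ≤ m) (hcol : ∀ y, {x | (x, y) ∈ R}.encard ≤ m) :
    ∃ (t : ℕ → Chart X) (r : ℕ), ∀ x y, (x, y) ∈ R → ∃ j < r, (x, y) ∈ (t j).rel := by
  choose a ha_lt ha using fun x => exists_injOn_lt_of_encard_le (hrow x)
  choose b hb_lt hb using fun y => exists_injOn_lt_of_encard_le (hcol y)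
  let t (j : ℕ) : Chart X :=
    { rel := {p | p ∈ R ∧ Nat.pair (a p.1 p.2) (b p.2 p.1) = j}
      functional := fun x _ _ h h' => ha x h.1 h'.1 (Nat.pair_eq_pair.1 (h.2.trans h'.2.symm)).1
      injective := fun _ _ y h h' => hb y h.1 h'.1 (Nat.pair_eq_pair.1 (h.2.trans h'.2.symm)).2 }
  refine ⟨t, (m + 1) ^ 2, fun x y hxy => ⟨Nat.pair (a x y) (b y x), ?_, hxy, rfl⟩⟩
  calc Nat.pair (a x y) (b y x) < (max (a x y) (b y x) + 1) ^ 2 := Nat.pair_lt_max_add_one_sq _ _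
    _ ≤ (m + 1) ^ 2 := by
      gcongr
      exact max_le (ha_lt x y hxy).le (hb_lt y x hxy).le

theorem exists_embedding_prod_bool {X W : Type*} {P : Set (Set X)} (hP : P.PairwiseDisjoint id)
    (e : W ↪ {B ∈ P | B.Nontrivial}) :
    ∃ ι : W × Bool ↪ X, ∀ B ∈ P, ∀ w c d, ι (w, c) ∈ B → ι (w, d) ∈ B := by
  choose p hp q hq hpq using fun w => (e w).2.2
  let g (s : W × Bool) : X := if s.2 then p s.1 else q s.1
  have hg (w : W) (c : Bool) : g (w, c) ∈ (e w).1 := by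
    cases c
    exacts [hq w, hp w]
  have hpart {B : Set X} (hB : B ∈ P) {w : W} {c : Bool} (h : g (w, c) ∈ B) : B = e w :=
    hP.elim_set hB (e w).2.1 _ h (hg w c)
  have hginj : Function.Injective g := by
    rintro ⟨v, c⟩ ⟨w, d⟩ h
    obtain rfl : v = w := e.injective (Subtype.ext (hpart (e v).2.1 (h ▸ hg v c)))
    cases c <;> cases d <;> simp_all [g, (hpq v).symm]
  refine ⟨⟨g, hginj⟩, fun B hB w c d h => ?_⟩
  rw [hpart hB h]
  exact hg w d

theorem mk_le_mk_of_sUnion_eq_univ_of_finite {X : Type u} [Infinite X] {P : Set (Set X)}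
    (hcover : ⋃₀ P = Set.univ) (hfin : ∀ B ∈ P, B.Finite) : #X ≤ #P := by
  have hPinf : P.Infinite := fun h => infinite_univ (hcover ▸ h.sUnion hfin)
  calc #X = #(⋃₀ P) := by rw [hcover, mk_univ]
    _ ≤ #P * ⨆ B : P, #B := mk_sUnion_le P
    _ ≤ #P * ℵ₀ := by
      gcongr
      exact ciSup_le' fun B => (hfin B B.2).lt_aleph0.le
    _ = #P := mul_aleph0_eq (infinite_iff.1 hPinf.to_subtype)

theorem mk_le_mk_setOf_nontrivial {X : Type u} [Infinite X] {P : Set (Set X)}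
    (hcover : ⋃₀ P = Set.univ) (hfin : ∀ B ∈ P, B.Finite) (hnontriv : ∀ B ∈ P, B.Nontrivial) :
    #X ≤ #{B ∈ P | B.Nontrivial} := by
  rw [sep_eq_self_iff_mem_true.2 hnontriv]
  exact mk_le_mk_of_sUnion_eq_univ_of_finite hcover hfin

theorem chartCone_subset_chartOrbit {X : Type u} (M : Set (Chart X)) (x : X) :
    ChartCone M x ⊆ ChartOrbit M x := subset_insert _ _

theorem setOf_mem_chartCone_subset_chartOrbit {X : Type u} {M : Set (Chart X)}
    (hM : ∀ f ∈ M, f⁻¹ ∈ M) (y : X) : {x | y ∈ ChartCone M x} ⊆ ChartOrbit M y :=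
  fun _ ⟨f, hf, hxy⟩ => .inr ⟨f⁻¹, hM f hf, hxy⟩

theorem stmt5_general {X : Type u} [Infinite X] {P : Set (Set X)} (hP : P.PairwiseDisjoint id)
    (hPX : #X ≤ #{B ∈ P | B.Nontrivial}) {M : Set (Chart X)} {m : ℕ}
    (himage : ∀ x, #(ChartCone M x) ≤ m) (hpreimage : ∀ y, #{x | y ∈ ChartCone M x} ≤ m) :
    BSleq M (PStab P) := by
  have hcard : #(X × ℕ) ≤ #{B ∈ P | B.Nontrivial} := by
    simpa [mul_aleph0_eq (aleph0_le_mk X)] using hPX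
  obtain ⟨e⟩ := (Cardinal.le_def _ _).1 hcard
  obtain ⟨ι, hι⟩ := exists_embedding_prod_bool hP e
  obtain ⟨t, r, ht⟩ := exists_charts_cover (R := {p | p.2 ∈ ChartCone M p.1})
    (fun x => toENat_le_natCast.2 (himage x)) (fun y => toENat_le_natCast.2 (hpreimage y))
  exact BSleq_PStab_of_charts_cover hι fun f hf x y hxy => ht x y ⟨f, hf, hxy⟩

/-- If `n ≥ 2`, `P` is an n-uniform partition of the infinite set
`X`, and `M` is an inverse subsemigroup of `I_X` whose orbits all have at most
`m` elements for some natural number `m`, then `M ≼ PStab P`. -/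
theorem stmt5 {X : Type u} [Infinite X] (n : ℕ) (hn : 2 ≤ n)
    (P : Set (Set X)) (hPpart : Setoid.IsPartition P)
    (hPn : ∀ B ∈ P, B.Finite ∧ B.ncard = n)
    (M : Set (Chart X)) (hM : IsInverseSubsemigroup M)
    (horb : ∃ m : ℕ, ∀ x : X, #↥(ChartOrbit M x) ≤ (m : Cardinal)) :
    BSleq M (PStab P) := by
  obtain ⟨m, hm⟩ := horb
  have hnontriv (B : Set X) (hB : B ∈ P) : B.Nontrivial :=
    (one_lt_ncard_iff_nontrivial_and_finite.1 ((hPn B hB).2 ▸ hn)).1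
  exact stmt5_general hPpart.pairwiseDisjoint
    (mk_le_mk_setOf_nontrivial hPpart.sUnion_eq_univ (fun B hB => (hPn B hB).1) hnontriv)
    (fun x => (mk_le_mk_of_subset (chartCone_subset_chartOrbit M x)).trans (hm x))
    (fun y => (mk_le_mk_of_subset (setOf_mem_chartCone_subset_chartOrbit hM.2 y)).trans (hm y))
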